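/- arXiv:2512.13811 — 4 statements merged into one kernel-verified Lean document; each statement's English description precedes it below -/
import Mathlib

section
/- Let n ≥ 5 be an integer, ξ ∈ ℝⁿ and ε > 0. For every k ∈ {0, 1, …, n}, the product φ_{(ξ,ε,k)} · w_{(ξ,ε)} is integrable on ℝⁿ and ∫_{ℝⁿ} φ_{(ξ,ε,k)}(x) · w_{(ξ,ε)}(x) dx = 0. -/
open MeasureTheory

/-- `ℝⁿ` as a Euclidean space. -/
abbrev En (n : ℕ) := EuclideanSpace ℝ (Fin n)

/-- The standard bubble `w_{(ξ,λ)}(x) = (2λ/(λ² + |x−ξ|²))^{(n−4)/2}`. -/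
noncomputable def bubble (n : ℕ) (ξ : En n) (l : ℝ) (x : En n) : ℝ :=
  (2 * l / (l ^ 2 + ‖x - ξ‖ ^ 2)) ^ (((n : ℝ) - 4) / 2)

/-- `φ_{(ξ,ε,0)}(x) = (2ε/(ε²+|x−ξ|²))^{(n+4)/2} · (|x−ξ|²−ε²)/(|x−ξ|²+ε²)`. -/
noncomputable def phi0 (n : ℕ) (ξ : En n) (ε : ℝ) (x : En n) : ℝ :=
  (2 * ε / (ε ^ 2 + ‖x - ξ‖ ^ 2)) ^ (((n : ℝ) + 4) / 2) *
    ((‖x - ξ‖ ^ 2 - ε ^ 2) / (‖x - ξ‖ ^ 2 + ε ^ 2))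

/-- `φ_{(ξ,ε,k)}(x) = (2ε/(ε²+|x−ξ|²))^{(n+4)/2} · 2ε(x_k−ξ_k)/(|x−ξ|²+ε²)`, for `k = 1,…,n`. -/
noncomputable def phiK (n : ℕ) (ξ : En n) (ε : ℝ) (k : Fin n) (x : En n) : ℝ :=
  (2 * ε / (ε ^ 2 + ‖x - ξ‖ ^ 2)) ^ (((n : ℝ) + 4) / 2) *
    (2 * ε * (x k - ξ k) / (‖x - ξ‖ ^ 2 + ε ^ 2))

theorem aux_prod (n : ℕ) (ε s : ℝ) (hε : 0 < ε) (hs : 0 ≤ s) (c : ℝ) :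
    (2 * ε / (ε ^ 2 + s)) ^ (((n : ℝ) + 4) / 2) * c * (2 * ε / (ε ^ 2 + s)) ^ (((n : ℝ) - 4) / 2)
      = (2 * ε / (ε ^ 2 + s)) ^ n * c := by
  have hp : 0 < 2 * ε / (ε ^ 2 + s) := by positivity
  rw [mul_right_comm, ← Real.rpow_add hp, ← Real.rpow_natCast _ n]
  have e : ((n : ℝ) + 4) / 2 + ((n : ℝ) - 4) / 2 = n := by ring
  rw [e]

theorem aux_int (n : ℕ) (hn : 5 ≤ n) (ε : ℝ) (hε : 0 < ε) :
    Integrable (fun x : En n => (2 * ε / (ε ^ 2 + ‖x‖ ^ 2)) ^ n) := by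
  have h := integrable_rpow_neg_one_add_norm_sq (E := En n) (μ := volume) (r := 2 * n)
    (by
      have : (5 : ℝ) ≤ n := by exact_mod_cast hn
      simp; linarith)
  refine (h.const_mul ((2 * ε + 2 / ε) ^ n)).mono' (by
    apply Continuous.aestronglyMeasurable
    refine Continuous.pow (Continuous.div (by fun_prop) (by fun_prop) fun x => ?_) n
    positivity) (Filter.Eventually.of_forall fun x => ?_)
  have e : (-(2 * (n : ℝ)) / 2) = -(n : ℝ) := by ring
  rw [e, Real.rpow_neg (by positivity), Real.rpow_natCast, Real.norm_of_nonneg (by positivity),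
    ← inv_pow, ← mul_pow]
  apply pow_le_pow_left₀ (by positivity)
  rw [← div_eq_mul_inv, div_le_div_iff₀ (by positivity) (by positivity)]
  have : (2 * ε + 2 / ε) * (ε ^ 2 + ‖x‖ ^ 2) - 2 * ε * (1 + ‖x‖ ^ 2)
      = 2 * ε ^ 3 + 2 / ε * ‖x‖ ^ 2 := by
    field_simp
    ring
  have h2 : 0 ≤ 2 * ε ^ 3 + 2 / ε * ‖x‖ ^ 2 := by positivity
  linarith

theorem aux_int_mul (n : ℕ) (hn : 5 ≤ n) (ε : ℝ) (hε : 0 < ε) (c : En n → ℝ)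
    (hc : Continuous c) (hb : ∀ x, |c x| ≤ 1) :
    Integrable (fun x : En n => (2 * ε / (ε ^ 2 + ‖x‖ ^ 2)) ^ n * c x) := by
  refine (aux_int n hn ε hε).mul_bdd (c := 1) hc.aestronglyMeasurable
    (Filter.Eventually.of_forall fun x => hb x)

theorem aux_zero (n : ℕ) (hn : 5 ≤ n) (ε : ℝ) (hε : 0 < ε) :
    Integrable (fun x : En n => (2 * ε / (ε ^ 2 + ‖x‖ ^ 2)) ^ n *
      ((‖x‖ ^ 2 - ε ^ 2) / (‖x‖ ^ 2 + ε ^ 2))) ∧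
    ∫ x : En n, (2 * ε / (ε ^ 2 + ‖x‖ ^ 2)) ^ n *
      ((‖x‖ ^ 2 - ε ^ 2) / (‖x‖ ^ 2 + ε ^ 2)) = 0 := by
  have hI : Integrable (fun x : En n => (2 * ε / (ε ^ 2 + ‖x‖ ^ 2)) ^ n *
      ((‖x‖ ^ 2 - ε ^ 2) / (‖x‖ ^ 2 + ε ^ 2))) := by
    refine aux_int_mul n hn ε hε _ (Continuous.div (by fun_prop) (by fun_prop) fun x => ?_)
      fun x => ?_
    · positivity
    · rw [abs_div, abs_of_pos (a := ‖x‖ ^ 2 + ε ^ 2) (by positivity),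
        div_le_one (by positivity), abs_le]
      constructor <;> nlinarith [sq_nonneg ‖x‖, sq_nonneg ε]
  refine ⟨hI, ?_⟩
  have : Nonempty (Fin n) := ⟨⟨0, by omega⟩⟩
  have : Nontrivial (En n) := inferInstance
  let f : ℝ → ℝ := fun r => (2 * ε / (ε ^ 2 + r ^ 2)) ^ n * ((r ^ 2 - ε ^ 2) / (r ^ 2 + ε ^ 2))
  have h1 := integral_fun_norm_addHaar (volume : Measure (En n)) f
  have h2 := (integrable_fun_norm_addHaar (volume : Measure (En n)) (f := f)).1 hI
  simp only [finrank_euclideanSpace, Fintype.card_fin] at h1 h2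
  have hn0 : (n : ℝ) ≠ 0 := by
    have : n ≠ 0 := by omega
    exact_mod_cast this
  have h3 : ∫ y in Set.Ioi (0 : ℝ), y ^ (n - 1) • f y = 0 := by
    have ht : Filter.Tendsto (fun r : ℝ => -((2 * ε) ^ n / n) * (r / (ε ^ 2 + r ^ 2)) ^ n)
        Filter.atTop (nhds 0) := by
      have h0 : Filter.Tendsto (fun r : ℝ => r / (ε ^ 2 + r ^ 2)) Filter.atTop (nhds 0) := by
        refine squeeze_zero' ?_ ?_ tendsto_inv_atTop_zero
        · filter_upwards [Filter.eventually_gt_atTop 0] with r hr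
          positivity
        · filter_upwards [Filter.eventually_gt_atTop 0] with r hr
          rw [div_le_iff₀ (by positivity)]
          have : r⁻¹ * (ε ^ 2 + r ^ 2) = r⁻¹ * ε ^ 2 + r := by field_simp
          have h2 : 0 ≤ r⁻¹ * ε ^ 2 := by positivity
          linarith
      have := (h0.pow n).const_mul (-((2 * ε) ^ n / n))
      rwa [zero_pow (by omega), mul_zero] at this
    have := integral_Ioi_of_hasDerivAt_of_tendsto' (a := 0)
      (f := fun r : ℝ => -((2 * ε) ^ n / n) * (r / (ε ^ 2 + r ^ 2)) ^ n)
      (f' := fun y => y ^ (n - 1) • f y) (fun r _ => ?_) h2 ht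
    · rw [this, zero_div, zero_pow (by omega)]
      simp
    · have hd : ε ^ 2 + r ^ 2 ≠ 0 := by positivity
      have hd' : r ^ 2 + ε ^ 2 ≠ 0 := by positivity
      have := (((hasDerivAt_id r).div (((hasDerivAt_id r).pow 2).const_add (ε ^ 2)) hd).pow
        n).const_mul (-((2 * ε) ^ n / n))
      refine HasDerivAt.congr_deriv this ?_
      obtain ⟨m, rfl⟩ : ∃ m, n = m + 1 := ⟨n - 1, by omega⟩
      simp only [f, smul_eq_mul, id, Nat.add_sub_cancel, div_pow, Pi.div_apply, Pi.pow_apply]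
      push_cast at hn0 ⊢
      rw [add_comm (r ^ 2) (ε ^ 2)]
      field_simp
      ring
  rw [h3] at h1
  simpa [f] using h1

theorem aux_k (n : ℕ) (hn : 5 ≤ n) (ε : ℝ) (hε : 0 < ε) (k : Fin n) :
    Integrable (fun x : En n => (2 * ε / (ε ^ 2 + ‖x‖ ^ 2)) ^ n *
      (2 * ε * x k / (‖x‖ ^ 2 + ε ^ 2))) ∧
    ∫ x : En n, (2 * ε / (ε ^ 2 + ‖x‖ ^ 2)) ^ n *
      (2 * ε * x k / (‖x‖ ^ 2 + ε ^ 2)) = 0 := by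
  constructor
  · refine aux_int_mul n hn ε hε _ (Continuous.div (by fun_prop) (by fun_prop) fun x => ?_)
      fun x => ?_
    · positivity
    · have hk : |x k| ≤ ‖x‖ := PiLp.norm_apply_le x k
      rw [abs_div, abs_of_pos (a := ‖x‖ ^ 2 + ε ^ 2) (by positivity),
        div_le_one (by positivity), abs_mul, abs_of_pos (a := 2 * ε) (by positivity)]
      nlinarith [sq_nonneg (‖x‖ - ε)]
  · have h := integral_neg_eq_self (fun x : En n => (2 * ε / (ε ^ 2 + ‖x‖ ^ 2)) ^ n *
      (2 * ε * x k / (‖x‖ ^ 2 + ε ^ 2))) volume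
    simp only [norm_neg, PiLp.neg_apply, mul_neg, neg_div, integral_neg] at h
    linarith

/-- For every `k ∈ {0,1,…,n}`, the product `φ_{(ξ,ε,k)} · w_{(ξ,ε)}` is integrable on `ℝⁿ`
with vanishing integral. -/
theorem phi_orthogonal_bubble (n : ℕ) (hn : 5 ≤ n)
    (ξ : En n) (ε : ℝ) (hε : 0 < ε) :
    (Integrable (fun x : En n => phi0 n ξ ε x * bubble n ξ ε x) ∧
      ∫ x : En n, phi0 n ξ ε x * bubble n ξ ε x = 0) ∧
    (∀ k : Fin n,
      Integrable (fun x : En n => phiK n ξ ε k x * bubble n ξ ε x) ∧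
      ∫ x : En n, phiK n ξ ε k x * bubble n ξ ε x = 0) := by
  constructor
  · have h := aux_zero n hn ε hε
    simp only [phi0, bubble, aux_prod n ε _ hε (sq_nonneg _)]
    exact ⟨h.1.comp_sub_right ξ, (integral_sub_right_eq_self (fun x : En n =>
      (2 * ε / (ε ^ 2 + ‖x‖ ^ 2)) ^ n * ((‖x‖ ^ 2 - ε ^ 2) / (‖x‖ ^ 2 + ε ^ 2))) ξ).trans h.2⟩
  · intro k
    have h := aux_k n hn ε hε k
    simp only [phiK, bubble, aux_prod n ε _ hε (sq_nonneg _)]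
    exact ⟨h.1.comp_sub_right ξ, (integral_sub_right_eq_self (fun x : En n =>
      (2 * ε / (ε ^ 2 + ‖x‖ ^ 2)) ^ n * (2 * ε * x k / (‖x‖ ^ 2 + ε ^ 2))) ξ).trans h.2⟩
end

section
/- Let n ≥ 5 be an integer. There exists a constant c(n) > 0 with the following property: for every measurable function η : ℝ → [0,1] with η(t) = 1 for all t ≤ 1, every ξ ∈ ℝⁿ and all 0 < ε ≤ r, the function x ↦ η(|x−ξ|/r)² · φ_{(ξ,ε,0)}(x) · w_{(ξ,ε)}(x) is integrable on ℝⁿ and |∫_{ℝⁿ} η(|x−ξ|/r)² · φ_{(ξ,ε,0)}(x) · w_{(ξ,ε)}(x) dx| ≤ c(n) · (ε/r)ⁿ. -/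
open MeasureTheory

open Set Filter Topology in
/-- One-dimensional radial estimate. -/
lemma radial_aux (n : ℕ) (hn : 5 ≤ n) (η : ℝ → ℝ) (hm : Measurable η)
    (h01 : ∀ t, η t ∈ Set.Icc (0 : ℝ) 1) (h1 : ∀ t ≤ (1 : ℝ), η t = 1)
    (ε r : ℝ) (hε : 0 < ε) (hr : ε ≤ r) :
    IntegrableOn (fun y : ℝ => y ^ (n - 1) • (η (y / r) ^ 2 *
      ((2 * ε / (ε ^ 2 + y ^ 2)) ^ n * ((y ^ 2 - ε ^ 2) / (y ^ 2 + ε ^ 2))))) (Ioi 0) ∧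
    |∫ y in Ioi (0:ℝ), y ^ (n - 1) • (η (y / r) ^ 2 *
      ((2 * ε / (ε ^ 2 + y ^ 2)) ^ n * ((y ^ 2 - ε ^ 2) / (y ^ 2 + ε ^ 2))))|
      ≤ 2 * 2 ^ n * (ε / r) ^ n := by
  have hr0 : 0 < r := lt_of_lt_of_le hε hr
  set g : ℝ → ℝ := fun y => y ^ (n - 1) *
      ((2 * ε / (ε ^ 2 + y ^ 2)) ^ n * ((y ^ 2 - ε ^ 2) / (y ^ 2 + ε ^ 2))) with hg
  set G : ℝ → ℝ := fun y => -((2 * ε * y / (ε ^ 2 + y ^ 2)) ^ n / n) with hG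
  set F : ℝ → ℝ := fun y : ℝ => y ^ (n - 1) • (η (y / r) ^ 2 *
      ((2 * ε / (ε ^ 2 + y ^ 2)) ^ n * ((y ^ 2 - ε ^ 2) / (y ^ 2 + ε ^ 2)))) with hF
  have hpos : ∀ y : ℝ, 0 < ε ^ 2 + y ^ 2 := fun y => by positivity
  have hn0 : (n : ℝ) ≠ 0 := by positivity
  have hFg : ∀ y, F y = η (y / r) ^ 2 * g y := fun y => by
    simp only [hF, hg, smul_eq_mul]; ring
  have hder : ∀ y, HasDerivAt G (g y) y := by
    intro y
    have hd : HasDerivAt (fun y : ℝ => 2 * ε * y / (ε ^ 2 + y ^ 2))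
        (((2 * ε * 1) * (ε ^ 2 + y ^ 2) - (2 * ε * y) * (2 * y)) / (ε ^ 2 + y ^ 2) ^ 2) y := by
      have a := (hasDerivAt_id y).const_mul (2 * ε)
      have b : HasDerivAt (fun y : ℝ => ε ^ 2 + y ^ 2) (2 * y) y := by
        simpa using ((hasDerivAt_id y).pow 2).const_add (ε ^ 2)
      exact a.div b (hpos y).ne'
    have h2 := ((hd.pow n).div_const (n : ℝ)).neg
    refine HasDerivAt.congr_deriv (f := G) h2 (Eq.symm ?_)
    show y ^ (n - 1) * ((2 * ε / (ε ^ 2 + y ^ 2)) ^ n * ((y ^ 2 - ε ^ 2) / (y ^ 2 + ε ^ 2))) = _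
    obtain ⟨m, rfl⟩ : ∃ m, n = m + 1 := ⟨n - 1, by omega⟩
    have := (hpos y).ne'
    rw [add_comm (y ^ 2) (ε ^ 2)]
    simp only [Nat.add_sub_cancel, div_pow, mul_pow]
    field_simp
    ring
  have hcg : Continuous g := by
    have : ∀ y : ℝ, ε ^ 2 + y ^ 2 ≠ 0 := fun y => (hpos y).ne'
    have h' : ∀ y : ℝ, y ^ 2 + ε ^ 2 ≠ 0 := fun y => by positivity
    simp only [hg]
    fun_prop (disch := assumption)
  have hlim : Tendsto G atTop (𝓝 0) := by
    have h0 : Tendsto (fun y : ℝ => 2 * ε * y / (ε ^ 2 + y ^ 2)) atTop (𝓝 0) := by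
      have hu : Tendsto (fun y : ℝ => 2 * ε * y⁻¹) atTop (𝓝 0) := by
        simpa using tendsto_inv_atTop_zero.const_mul (2 * ε)
      refine squeeze_zero' ?_ ?_ hu
      · filter_upwards [eventually_gt_atTop 0] with y hy
        have := hpos y
        positivity
      · filter_upwards [eventually_gt_atTop 0] with y hy
        rw [div_le_iff₀ (hpos y)]
        have : 2 * ε * y⁻¹ * (ε ^ 2 + y ^ 2) = 2 * ε * y + 2 * ε ^ 3 * y⁻¹ := by
          field_simp; ring
        rw [this]
        have : 0 < 2 * ε ^ 3 * y⁻¹ := by positivity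
        linarith
    have := ((h0.pow n).div_const (n : ℝ)).neg
    simpa [zero_pow (by omega : n ≠ 0)] using this
  have hgnn : ∀ y ∈ Ioi r, 0 ≤ g y := by
    intro y hy
    have hy' : r < y := hy
    have hy0 : 0 < y := hr0.trans hy'
    have : 0 ≤ y ^ 2 - ε ^ 2 := by nlinarith
    simp only [hg]
    positivity
  have hgi : IntegrableOn g (Ioi r) :=
    integrableOn_Ioi_deriv_of_nonneg' (fun y _ => hder y) hgnn hlim
  have hgint : ∫ y in Ioi r, g y = 0 - G r :=
    integral_Ioi_of_hasDerivAt_of_nonneg' (fun y _ => hder y) hgnn hlim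
  have hFm : Measurable F := by
    have : F = fun y => η (y / r) ^ 2 * g y := funext hFg
    rw [this]
    exact ((hm.comp (measurable_id.div_const r)).pow_const 2).mul hcg.measurable
  have hle : ∀ y ∈ Ioi r, ‖F y‖ ≤ g y := by
    intro y hy
    have h3 := h01 (y / r)
    rw [hFg, Real.norm_eq_abs, abs_of_nonneg (mul_nonneg (sq_nonneg _) (hgnn y hy))]
    exact mul_le_of_le_one_left (hgnn y hy) (pow_le_one₀ h3.1 h3.2)
  have hae : ∀ᵐ y ∂(volume.restrict (Ioi r)), ‖F y‖ ≤ g y :=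
    (ae_restrict_iff' measurableSet_Ioi).2 (Eventually.of_forall hle)
  have hFi2 : IntegrableOn F (Ioi r) :=
    Integrable.mono' hgi hFm.aestronglyMeasurable hae
  have heq : EqOn F g (Ioc 0 r) := by
    intro y hy
    rw [hFg, h1 _ ((div_le_one hr0).2 hy.2)]; ring
  have hgi1 : IntegrableOn g (Ioc 0 r) :=
    (hcg.integrableOn_Icc).mono_set Ioc_subset_Icc_self
  have hFi1 : IntegrableOn F (Ioc 0 r) := hgi1.congr_fun heq.symm measurableSet_Ioc
  have hun : Ioc 0 r ∪ Ioi r = Ioi (0:ℝ) := Ioc_union_Ioi_eq_Ioi hr0.le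
  refine ⟨hun ▸ hFi1.union hFi2, ?_⟩
  have hGr : |G r| ≤ 2 ^ n * (ε / r) ^ n := by
    simp only [hG, abs_neg]
    have hb := hpos r
    rw [abs_of_nonneg (by positivity), ← mul_pow]
    have hn1 : (1:ℝ) ≤ n := by exact_mod_cast (by omega : 1 ≤ n)
    refine (div_le_self (by positivity) hn1).trans ?_
    refine pow_le_pow_left₀ (by positivity) ?_ n
    rw [div_le_iff₀ hb]
    have : 2 * (ε / r) * (ε ^ 2 + r ^ 2) = 2 * ε * r + 2 * ε ^ 3 / r := by
      field_simp; ring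
    rw [this]
    have : 0 < 2 * ε ^ 3 / r := by positivity
    linarith
  have hI1 : ∫ y in Ioc 0 r, F y = G r := by
    rw [setIntegral_congr_fun measurableSet_Ioc heq, ← intervalIntegral.integral_of_le hr0.le,
      intervalIntegral.integral_eq_sub_of_hasDerivAt (fun y _ => hder y)
        (hcg.intervalIntegrable _ _)]
    have : G 0 = 0 := by simp [hG, zero_pow (by omega : n ≠ 0)]
    rw [this, sub_zero]
  have hI2 : |∫ y in Ioi r, F y| ≤ |G r| := by
    have := norm_integral_le_of_norm_le hgi hae
    rw [hgint, zero_sub] at this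
    exact this.trans (neg_le_abs _)
  rw [← hun, setIntegral_union (Ioc_disjoint_Ioi le_rfl) measurableSet_Ioi hFi1 hFi2, hI1]
  have := abs_add_le (G r) (∫ y in Ioi r, F y)
  linarith

/-- For any cutoff `η : ℝ → [0,1]` with `η ≡ 1` on `(-∞,1]`, the function
`x ↦ η(|x−ξ|/r)²·φ_{(ξ,ε,0)}(x)·w_{(ξ,ε)}(x)` is integrable with
`|∫| ≤ c(n)·(ε/r)ⁿ`, for `0 < ε ≤ r`. -/
theorem cutoff_phi0_bubble_estimate (n : ℕ) (hn : 5 ≤ n) :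
    ∃ c : ℝ, 0 < c ∧
      ∀ η : ℝ → ℝ, Measurable η → (∀ t, η t ∈ Set.Icc (0 : ℝ) 1) →
        (∀ t ≤ (1 : ℝ), η t = 1) →
        ∀ (ξ : En n) (ε r : ℝ), 0 < ε → ε ≤ r →
          Integrable
            (fun x : En n => η (‖x - ξ‖ / r) ^ 2 * phi0 n ξ ε x * bubble n ξ ε x) ∧
          |∫ x : En n, η (‖x - ξ‖ / r) ^ 2 * phi0 n ξ ε x * bubble n ξ ε x|
            ≤ c * (ε / r) ^ n := by
  set V : ℝ := (volume : Measure (En n)).real (Metric.ball 0 1) with hV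
  have hV0 : 0 ≤ V := measureReal_nonneg
  refine ⟨n * V * (2 * 2 ^ n) + 1, by positivity, ?_⟩
  intro η hm h01 h1 ξ ε r hε hr
  obtain ⟨hi, hb⟩ := radial_aux n hn η hm h01 h1 ε r hε hr
  have hr0 : 0 < r := lt_of_lt_of_le hε hr
  set f : ℝ → ℝ := fun y => η (y / r) ^ 2 *
      ((2 * ε / (ε ^ 2 + y ^ 2)) ^ n * ((y ^ 2 - ε ^ 2) / (y ^ 2 + ε ^ 2))) with hf
  have : Nonempty (Fin n) := ⟨⟨0, by omega⟩⟩
  have : Nontrivial (En n) := inferInstance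
  have hfin : Module.finrank ℝ (En n) = n := by simp [En]
  have hfun : (fun x : En n => η (‖x - ξ‖ / r) ^ 2 * phi0 n ξ ε x * bubble n ξ ε x)
      = fun x => (fun z : En n => f ‖z‖) (x - ξ) := by
    funext x
    simp only [phi0, bubble, hf]
    have ha : 0 < 2 * ε / (ε ^ 2 + ‖x - ξ‖ ^ 2) := by positivity
    have : (2 * ε / (ε ^ 2 + ‖x - ξ‖ ^ 2)) ^ n =
      (2 * ε / (ε ^ 2 + ‖x - ξ‖ ^ 2)) ^ (((n : ℝ) + 4) / 2) *
      (2 * ε / (ε ^ 2 + ‖x - ξ‖ ^ 2)) ^ (((n : ℝ) - 4) / 2) := by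
      rw [← Real.rpow_add ha, ← Real.rpow_natCast]
      congr 1; ring
    rw [this]; ring
  rw [hfun]
  constructor
  · refine Integrable.comp_sub_right (f := fun z : En n => f ‖z‖) ?_ ξ
    rw [integrable_fun_norm_addHaar, hfin]
    exact hi
  · rw [integral_sub_right_eq_self (fun z : En n => f ‖z‖) ξ,
      integral_fun_norm_addHaar, hfin, ← hV, nsmul_eq_mul, smul_eq_mul, abs_mul, abs_mul,
      abs_of_nonneg hV0, Nat.abs_cast]
    have hq : 0 ≤ (ε / r) ^ n := by positivity
    calc (n : ℝ) * (V * _) ≤ n * (V * (2 * 2 ^ n * (ε / r) ^ n)) := by gcongr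
      _ ≤ _ := by linarith
end

section
/- Let n ≥ 5 be an integer. There exists a constant c(n) > 0 such that for every ξ ∈ ℝⁿ, all 0 < ε ≤ r, and every k ∈ {0, 1, …, n}, ∫_{B_r(ξ)} w_{(ξ,ε)}(x)^{−8/(n−4)} · φ_{(ξ,ε,k)}(x)² dx ≥ c(n), where B_r(ξ) = {x ∈ ℝⁿ : |x − ξ| < r}. -/
open MeasureTheory

noncomputable def cst (n : ℕ) : ℝ := 1 / 16 * ((1 / 4) ^ n * volume.real (Metric.ball (0 : En n) 1))

lemma cst_pos (n : ℕ) : 0 < cst n := by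
  unfold cst
  have : 0 < volume.real (Metric.ball (0 : En n) 1) :=
    ENNReal.toReal_pos (Metric.measure_ball_pos _ _ one_pos).ne' measure_ball_lt_top.ne
  positivity

lemma key (n : ℕ) (ξ y : En n) (ε r : ℝ) (hε : 0 < ε) (f : En n → ℝ) (hf : Continuous f)
    (h0 : ∀ x, 0 ≤ f x) (hs : Metric.ball y (ε / 4) ⊆ Metric.ball ξ r)
    (hl : ∀ x ∈ Metric.ball y (ε / 4), 1 / 16 * (1 / ε) ^ n ≤ f x) :
    cst n ≤ ∫ x in Metric.ball ξ r, f x := by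
  have hi : IntegrableOn f (Metric.ball ξ r) :=
    (hf.continuousOn.integrableOn_compact (isCompact_closedBall ξ r)).mono_set
      Metric.ball_subset_closedBall
  have h1 : ∫ x in Metric.ball y (ε / 4), f x ≤ ∫ x in Metric.ball ξ r, f x :=
    setIntegral_mono_set hi (Filter.Eventually.of_forall h0) hs.eventuallyLE
  refine le_trans ?_ h1
  have h2 : ∫ x in Metric.ball y (ε / 4), (1 / 16 * (1 / ε) ^ n : ℝ) ≤
      ∫ x in Metric.ball y (ε / 4), f x :=
    setIntegral_mono_on (integrableOn_const measure_ball_lt_top.ne) (hi.mono_set hs)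
      measurableSet_ball hl
  refine le_trans (le_of_eq ?_) h2
  rw [setIntegral_const, measureReal_def, Measure.addHaar_ball_of_pos _ _ (by positivity),
    ENNReal.toReal_mul, ENNReal.toReal_ofReal (by positivity), ← measureReal_def, cst, smul_eq_mul,
    finrank_euclideanSpace_fin, div_pow, div_pow, div_pow]
  field_simp

lemma integrand_eq (n : ℕ) (hn : 5 ≤ n) (u q : ℝ) (hu : 0 < u) :
    (u ^ (((n : ℝ) - 4) / 2)) ^ (-((8 : ℝ) / ((n : ℝ) - 4))) *
      (u ^ (((n : ℝ) + 4) / 2) * q) ^ 2 = u ^ n * q ^ 2 := by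
  have hn' : (5 : ℝ) ≤ n := by exact_mod_cast hn
  have : (n : ℝ) - 4 ≠ 0 := by linarith
  rw [mul_pow, ← mul_assoc, ← Real.rpow_mul hu.le, ← Real.rpow_natCast (u ^ (((n : ℝ) + 4) / 2)),
    ← Real.rpow_mul hu.le, ← Real.rpow_add hu, ← Real.rpow_natCast u n]
  congr 2
  push_cast
  field_simp
  ring

lemma pointwise (n : ℕ) (ε t q : ℝ) (hε : 0 < ε) (ht0 : 0 ≤ t) (ht : t ≤ ε) (hq : 1 / 16 ≤ q ^ 2) :
    1 / 16 * (1 / ε) ^ n ≤ (2 * ε / (ε ^ 2 + t ^ 2)) ^ n * q ^ 2 := by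
  rw [mul_comm]
  have : 1 / ε ≤ 2 * ε / (ε ^ 2 + t ^ 2) := by
    rw [div_le_div_iff₀ hε (by positivity)]
    nlinarith
  gcongr

/-- Lower bound: `∫_{B_r(ξ)} w_{(ξ,ε)}^{−8/(n−4)}·φ_{(ξ,ε,k)}² ≥ c(n) > 0`
for all `k ∈ {0,1,…,n}` and `0 < ε ≤ r`. -/
theorem phi_weighted_lower_bound (n : ℕ) (hn : 5 ≤ n) :
    ∃ c : ℝ, 0 < c ∧
      ∀ (ξ : En n) (ε r : ℝ), 0 < ε → ε ≤ r →
        (c ≤ ∫ x in Metric.ball ξ r,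
            bubble n ξ ε x ^ (-((8 : ℝ) / ((n : ℝ) - 4))) * phi0 n ξ ε x ^ 2) ∧
        (∀ k : Fin n,
          c ≤ ∫ x in Metric.ball ξ r,
            bubble n ξ ε x ^ (-((8 : ℝ) / ((n : ℝ) - 4))) * phiK n ξ ε k x ^ 2) := by
  refine ⟨cst n, cst_pos n, fun ξ ε r hε hr => ⟨?_, fun k => ?_⟩⟩
  · have hc : Continuous fun x : En n => (2 * ε / (ε ^ 2 + ‖x - ξ‖ ^ 2)) ^ n *
        ((‖x - ξ‖ ^ 2 - ε ^ 2) / (‖x - ξ‖ ^ 2 + ε ^ 2)) ^ 2 := by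
      fun_prop (disch := intro x; positivity)
    have he : ∀ x : En n, bubble n ξ ε x ^ (-((8 : ℝ) / ((n : ℝ) - 4))) * phi0 n ξ ε x ^ 2 =
        (2 * ε / (ε ^ 2 + ‖x - ξ‖ ^ 2)) ^ n *
        ((‖x - ξ‖ ^ 2 - ε ^ 2) / (‖x - ξ‖ ^ 2 + ε ^ 2)) ^ 2 := fun x =>
      integrand_eq n hn _ _ (by positivity)
    simp_rw [he]
    refine key n ξ ξ ε r hε _ hc (fun x => by positivity)
      (Metric.ball_subset_ball (by linarith)) fun x hx => ?_
    rw [mem_ball_iff_norm] at hx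
    refine pointwise n ε _ _ hε (norm_nonneg _) (by linarith) ?_
    have h0 := norm_nonneg (x - ξ)
    have h : (1 / 4 : ℝ) ≤ (ε ^ 2 - ‖x - ξ‖ ^ 2) / (‖x - ξ‖ ^ 2 + ε ^ 2) := by
      rw [div_le_div_iff₀ (by norm_num) (by positivity)]
      nlinarith
    have h2 : (‖x - ξ‖ ^ 2 - ε ^ 2) / (‖x - ξ‖ ^ 2 + ε ^ 2) =
      -((ε ^ 2 - ‖x - ξ‖ ^ 2) / (‖x - ξ‖ ^ 2 + ε ^ 2)) := by ring
    rw [h2]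
    nlinarith
  · have hc : Continuous fun x : En n => (2 * ε / (ε ^ 2 + ‖x - ξ‖ ^ 2)) ^ n *
        (2 * ε * (x k - ξ k) / (‖x - ξ‖ ^ 2 + ε ^ 2)) ^ 2 := by
      fun_prop (disch := intro x; positivity)
    have he : ∀ x : En n, bubble n ξ ε x ^ (-((8 : ℝ) / ((n : ℝ) - 4))) * phiK n ξ ε k x ^ 2 =
        (2 * ε / (ε ^ 2 + ‖x - ξ‖ ^ 2)) ^ n *
        (2 * ε * (x k - ξ k) / (‖x - ξ‖ ^ 2 + ε ^ 2)) ^ 2 := fun x =>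
      integrand_eq n hn _ _ (by positivity)
    simp_rw [he]
    have hd : ∀ x ∈ Metric.ball (ξ + EuclideanSpace.single k (ε / 2)) (ε / 4),
        ‖x - ξ‖ < ε ∧ ε / 4 ≤ x k - ξ k := by
      intro x hx
      rw [mem_ball_iff_norm] at hx
      constructor
      · have h1 := norm_add_le (x - (ξ + EuclideanSpace.single k (ε / 2)))
          (EuclideanSpace.single k (ε / 2))
        rw [EuclideanSpace.norm_single, Real.norm_of_nonneg (by positivity)] at h1
        have h2 : x - (ξ + EuclideanSpace.single k (ε / 2)) + EuclideanSpace.single k (ε / 2) =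
          x - ξ := by abel
        rw [h2] at h1
        linarith
      · have h1 := PiLp.norm_apply_le (x - (ξ + EuclideanSpace.single k (ε / 2))) k
        have h3 := (abs_le.1 (h1.trans hx.le)).1
        simp at h3
        linarith
    refine key n ξ (ξ + EuclideanSpace.single k (ε / 2)) ε r hε _ hc (fun x => by positivity)
      (fun x hx => ?_) fun x hx => ?_
    · rw [mem_ball_iff_norm]
      exact (hd x hx).1.trans_le hr
    obtain ⟨h1, h2⟩ := hd x hx
    refine pointwise n ε _ _ hε (norm_nonneg _) h1.le ?_
    have h0 := norm_nonneg (x - ξ)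
    have h : (1 / 4 : ℝ) ≤ 2 * ε * (x k - ξ k) / (‖x - ξ‖ ^ 2 + ε ^ 2) := by
      rw [div_le_div_iff₀ (by norm_num) (by positivity)]
      nlinarith
    nlinarith
end

section
/- Let n ≥ 12 be an integer. There exists a constant C(n) > 0 such that for every real number a ≥ 0 and every real number u: | |u|^{2n/(n−4)} − a^{2n/(n−4)} − (n/4) · (|u|^{8/(n−4)} − a^{8/(n−4)}) · u · a | ≤ C(n) · |u − a|^{2n/(n−4)}. -/
lemma aux_near (q : ℝ) (hq : 0 < q) (hq1 : q ≤ 1) (s : ℝ) (hs : |s - 1| ≤ 1 / 2) :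
    |s ^ (q + 2) - 1 - (q + 2) / q * (s ^ q - 1) * s| ≤ 12 * |s - 1| ^ (q + 2) := by
  set r := |s - 1| with hr
  have hr0 : 0 ≤ r := abs_nonneg _
  have mem : ∀ x ∈ Metric.closedBall (1 : ℝ) r, 1 / 2 ≤ x ∧ |x - 1| ≤ r := by
    intro x hx
    rw [Metric.mem_closedBall, Real.dist_eq] at hx
    have := abs_le.1 hx
    exact ⟨by linarith, hx⟩
  have h1mem : (1 : ℝ) ∈ Metric.closedBall (1 : ℝ) r := Metric.mem_closedBall_self hr0
  have hconv : Convex ℝ (Metric.closedBall (1 : ℝ) r) := convex_closedBall _ _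
  let g : ℝ → ℝ := fun x => (q + 2) * x ^ (q + 1) - (q + 2) / q * ((q + 1) * x ^ q - 1)
  have hg1 : g 1 = 0 := by simp [g]; field_simp; ring
  have dg : ∀ x ∈ Metric.closedBall (1 : ℝ) r,
      HasDerivWithinAt g ((q + 2) * (q + 1) * x ^ (q - 1) * (x - 1))
        (Metric.closedBall (1 : ℝ) r) x := by
    intro x hx
    have hx0 : 0 < x := by linarith [(mem x hx).1]
    have e1 := Real.hasDerivAt_rpow_const (x := x) (p := q + 1) (Or.inl hx0.ne')
    have e2 := Real.hasDerivAt_rpow_const (x := x) (p := q) (Or.inl hx0.ne')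
    have e := (e1.const_mul (q + 2)).sub
      (((e2.const_mul (q + 1)).sub_const 1).const_mul ((q + 2) / q))
    refine (e.congr_deriv ?_).hasDerivWithinAt
    have : x ^ q = x ^ (q - 1) * x := by
      rw [← Real.rpow_add_one hx0.ne']; ring_nf
    rw [show q + 1 - 1 = q by ring, this]
    field_simp
  have bg : ∀ x ∈ Metric.closedBall (1 : ℝ) r,
      ‖(q + 2) * (q + 1) * x ^ (q - 1) * (x - 1)‖ ≤ 12 * r := by
    intro x hx
    obtain ⟨hx1, hx2⟩ := mem x hx
    have hx0 : 0 < x := by linarith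
    have b1 : x ^ (q - 1) ≤ 2 := by
      calc x ^ (q - 1) ≤ (1 / 2 : ℝ) ^ (q - 1) :=
            Real.rpow_le_rpow_of_nonpos (by norm_num) hx1 (by linarith)
        _ ≤ (1 / 2 : ℝ) ^ (-1 : ℝ) :=
            Real.rpow_le_rpow_of_exponent_ge (by norm_num) (by norm_num) (by linarith)
        _ = 2 := by rw [Real.rpow_neg_one]; norm_num
    have b0 : 0 ≤ x ^ (q - 1) := Real.rpow_nonneg hx0.le _
    have b2 : (q + 2) * (q + 1) ≤ 6 := by nlinarith
    have b3 : 0 ≤ (q + 2) * (q + 1) := by positivity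
    rw [Real.norm_eq_abs, abs_mul, abs_of_nonneg (mul_nonneg b3 b0)]
    have : (q + 2) * (q + 1) * x ^ (q - 1) ≤ 6 * 2 :=
      mul_le_mul b2 b1 b0 (by norm_num)
    exact mul_le_mul (by linarith) hx2 (abs_nonneg _) (by norm_num)
  have bg' : ∀ x ∈ Metric.closedBall (1 : ℝ) r, ‖g x‖ ≤ 12 * r * r := by
    intro x hx
    have := hconv.norm_image_sub_le_of_norm_hasDerivWithin_le dg bg h1mem hx
    rw [hg1, sub_zero] at this
    refine this.trans ?_
    exact mul_le_mul_of_nonneg_left (mem x hx).2 (by positivity)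
  let f : ℝ → ℝ := fun x => x ^ (q + 2) - 1 - (q + 2) / q * (x ^ q - 1) * x
  have hf1 : f 1 = 0 := by simp [f]
  have df : ∀ x ∈ Metric.closedBall (1 : ℝ) r,
      HasDerivWithinAt f (g x) (Metric.closedBall (1 : ℝ) r) x := by
    intro x hx
    have hx0 : 0 < x := by linarith [(mem x hx).1]
    have e1 := Real.hasDerivAt_rpow_const (x := x) (p := q + 2) (Or.inl hx0.ne')
    have e2 := Real.hasDerivAt_rpow_const (x := x) (p := q) (Or.inl hx0.ne')
    have e := (e1.sub_const 1).sub
      (((e2.sub_const 1).const_mul ((q + 2) / q)).mul (hasDerivAt_id x))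
    refine (e.congr_deriv ?_).hasDerivWithinAt
    have : x ^ q = x ^ (q - 1) * x := by
      rw [← Real.rpow_add_one hx0.ne']; ring_nf
    simp only [g, id]
    rw [show q + 2 - 1 = q + 1 by ring, this]
    field_simp
    ring
  have hsmem : s ∈ Metric.closedBall (1 : ℝ) r := by
    rw [Metric.mem_closedBall, Real.dist_eq]
  have := hconv.norm_image_sub_le_of_norm_hasDerivWithin_le df bg' h1mem hsmem
  rw [hf1, sub_zero, Real.norm_eq_abs, Real.norm_eq_abs, ← hr] at this
  refine this.trans ?_
  have h3 : r ^ (3 : ℝ) ≤ r ^ (q + 2) :=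
    Real.rpow_le_rpow_of_exponent_ge_of_imp hr0 (by linarith) (by linarith)
      (by intro _ h; linarith)
  have h4 : r ^ (3 : ℝ) = r ^ 3 := by norm_cast
  rw [h4] at h3
  nlinarith

lemma aux_far (q : ℝ) (hq : 0 < q) (s : ℝ) (hs : 1 / 2 ≤ |s - 1|) :
    |(|s| ^ (q + 2) - 1 - (q + 2) / q * (|s| ^ q - 1) * s)|
      ≤ (2 + 2 * ((q + 2) / q)) * 3 ^ (q + 2) * |s - 1| ^ (q + 2) := by
  have hM : |s| ≤ 3 * |s - 1| := by
    have : |s| ≤ |s - 1| + 1 := by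
      calc |s| = |(s - 1) + 1| := by ring_nf
        _ ≤ _ := (abs_add_le _ _).trans (by simp)
    linarith
  have h1 : 1 ≤ 3 * |s - 1| := by linarith
  rw [mul_assoc (2 + 2 * ((q + 2) / q)), ← Real.mul_rpow (by norm_num) (abs_nonneg _)]
  set M := 3 * |s - 1|
  have hs0 := abs_nonneg s
  have hM0 : 0 < M := by linarith
  have c1 : |s| ^ (q + 2) ≤ M ^ (q + 2) := Real.rpow_le_rpow hs0 hM (by linarith)
  have c2 : 1 ≤ M ^ (q + 2) := Real.one_le_rpow h1 (by linarith)
  have c4 : |s| ≤ M ^ (q + 2) := hM.trans (by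
    simpa using Real.rpow_le_rpow_of_exponent_le h1 (show (1 : ℝ) ≤ q + 2 by linarith))
  have c3 : |s| ^ q * |s| ≤ M ^ (q + 2) := by
    calc |s| ^ q * |s| ≤ M ^ q * M :=
          mul_le_mul (Real.rpow_le_rpow hs0 hM hq.le) hM hs0 (by positivity)
      _ = M ^ (q + 1) := by rw [Real.rpow_add_one hM0.ne']
      _ ≤ _ := Real.rpow_le_rpow_of_exponent_le h1 (by linarith)
  have n1 : 0 ≤ |s| ^ (q + 2) := by positivity
  have n2 : 0 ≤ |s| ^ q := by positivity
  have d1 : |(|s| ^ q - 1) * s| ≤ 2 * M ^ (q + 2) := by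
    rw [abs_mul]
    have : |(|s| ^ q - 1)| ≤ |s| ^ q + 1 := by
      rw [abs_le]; constructor <;> linarith
    nlinarith
  have hk : 0 ≤ (q + 2) / q := by positivity
  have d2 : |(q + 2) / q * (|s| ^ q - 1) * s| ≤ (q + 2) / q * (2 * M ^ (q + 2)) := by
    rw [mul_assoc, abs_mul, abs_of_nonneg hk]
    exact mul_le_mul_of_nonneg_left d1 hk
  have := abs_le.1 d2
  rw [abs_le]
  constructor <;> nlinarith

lemma aux_all (q : ℝ) (hq : 0 < q) (hq1 : q ≤ 1) :
    ∃ C : ℝ, 1 ≤ C ∧ ∀ s : ℝ, |(|s| ^ (q + 2) - 1 - (q + 2) / q * (|s| ^ q - 1) * s)|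
      ≤ C * |s - 1| ^ (q + 2) := by
  have hD : 0 ≤ (2 + 2 * ((q + 2) / q)) * (3 : ℝ) ^ (q + 2) := by positivity
  refine ⟨12 + (2 + 2 * ((q + 2) / q)) * 3 ^ (q + 2), by linarith, fun s => ?_⟩
  have hp : 0 ≤ |s - 1| ^ (q + 2) := by positivity
  rcases le_total (|s - 1|) (1 / 2) with h | h
  · have := aux_near q hq hq1 s h
    have hs : |s| = s := abs_of_nonneg (by linarith [(abs_le.1 h).1])
    rw [hs]
    refine this.trans ?_
    gcongr
    linarith
  · refine (aux_far q hq s h).trans ?_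
    gcongr
    linarith

/-- Elementary pointwise estimate comparing `|u|^{2n/(n−4)}` with `a^{2n/(n−4)}`. -/
theorem power_difference_estimate (n : ℕ) (hn : 12 ≤ n) :
    ∃ C : ℝ, 0 < C ∧
      ∀ a u : ℝ, 0 ≤ a →
        |(|u| ^ (2 * (n : ℝ) / ((n : ℝ) - 4)) - a ^ (2 * (n : ℝ) / ((n : ℝ) - 4)) -
            (n : ℝ) / 4 * (|u| ^ ((8 : ℝ) / ((n : ℝ) - 4)) - a ^ ((8 : ℝ) / ((n : ℝ) - 4))) *
              u * a)|
          ≤ C * |u - a| ^ (2 * (n : ℝ) / ((n : ℝ) - 4)) := by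
  have hn' : (12 : ℝ) ≤ n := by exact_mod_cast hn
  have hpos : (0 : ℝ) < (n : ℝ) - 4 := by linarith
  have hp : 2 * (n : ℝ) / ((n : ℝ) - 4) = 8 / ((n : ℝ) - 4) + 2 := by field_simp; ring
  have hc : (n : ℝ) / 4 = (8 / ((n : ℝ) - 4) + 2) / (8 / ((n : ℝ) - 4)) := by
    rw [← hp]; field_simp; ring
  have hq : 0 < 8 / ((n : ℝ) - 4) := by positivity
  have hq1 : 8 / ((n : ℝ) - 4) ≤ 1 := by rw [div_le_one hpos]; linarith
  rw [hp, hc]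
  generalize 8 / ((n : ℝ) - 4) = q at *
  obtain ⟨C, hC, h⟩ := aux_all q hq hq1
  refine ⟨C, by linarith, fun a u ha => ?_⟩
  rcases ha.eq_or_lt with rfl | ha
  · have h0 : (0 : ℝ) ^ (q + 2) = 0 := Real.zero_rpow (by linarith)
    have hu : 0 ≤ |u| ^ (q + 2) := by positivity
    simp only [h0, mul_zero, sub_zero, abs_of_nonneg hu]
    nlinarith
  · obtain ⟨s, rfl⟩ : ∃ s, u = a * s := ⟨u / a, by field_simp⟩
    have e1 : |a * s| = a * |s| := by rw [abs_mul, abs_of_pos ha]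
    have e2 : |a * s - a| = a * |s - 1| := by
      rw [← abs_of_pos ha, ← abs_mul, abs_of_pos ha]; ring_nf
    rw [e1, e2, Real.mul_rpow ha.le (abs_nonneg _), Real.mul_rpow ha.le (abs_nonneg _),
      Real.mul_rpow ha.le (abs_nonneg _)]
    have e3 : a ^ (q + 2) = a ^ q * a ^ 2 := by
      rw [Real.rpow_add ha]; norm_num
    have hP : 0 ≤ a ^ (q + 2) := by positivity
    have key : a ^ (q + 2) * |s| ^ (q + 2) - a ^ (q + 2) -
        (q + 2) / q * (a ^ q * |s| ^ q - a ^ q) * (a * s) * a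
        = a ^ (q + 2) * (|s| ^ (q + 2) - 1 - (q + 2) / q * (|s| ^ q - 1) * s) := by
      rw [e3]; ring
    rw [key, abs_mul, abs_of_nonneg hP]
    have := mul_le_mul_of_nonneg_left (h s) hP
    linarith
end
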